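/- Let J = [[0,1],[−1,0]] and let B₁,…,B₆ ∈ so(4) be as follows: B₁ = diag(J,J), B₂ = E₁₄ + E₂₃ − E₃₂ − E₄₁, B₃ = E₁₃ + E₂₄ − E₃₁ − E₄₂, B₄ = diag(J,−J), B₅ = E₁₄ − E₂₃ + E₃₂ − E₄₁, B₆ = E₁₃ − E₂₄ − E₃₁ + E₄₂. For real parameters a₁, λ, b₁,…,b_j (2 ≤ j ≤ 6), let C ∈ so(9)^j have first component diag(a₁J, λ·K₁, b₁B₁), second component diag(0₂, λ·K₂, b₂B₂), and i-th component diag(0₂, 0₃, b_iB_i) for 3 ≤ i ≤ j, where K₁, K₂ ∈ so(3) are K₁ = E₁₂ − E₂₁ and K₂ = E₂₃ − E₃₂. Then m1(C) = diag(2a₁², 2a₁², 2λ², 4λ², 2λ², 2(b₁²+⋯+b_j²)·Id₄). Moreover, if 4a₁² = 6λ² = 4(b₁²+⋯+b_j²), then the symmetric matrix B = diag(0, 0, −λ², λ², −λ², 0, 0, 0, 0) satisfies B·C = 0 and m1(C) = 3λ²·Id₉ + B, hence m1(C)·C = 6λ²·C; so C is a GL₉(ℝ)-distinguished point with non-scalar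 m1(C), producing a non-trivial Ricci Yang–Mills soliton. -/

import Mathlib

/-!
Every object is block diagonal of type `2 + 3 + 4`, so squares and sums are computed blockwise.
Each `B_i` is a complex structure on `ℝ⁴` (`B_i² = -1`, `Bmat_mul_self`), and so is `J` on `ℝ²`,
so only the `3 × 3` block of `m1(C)`, built from `K₁² = -diag(1,1,0)` and `K₂² = -diag(0,1,1)`,
fails to be scalar. The non-scalar part `B` annihilates `C` because `K₁` and `K₂` only link the
middle coordinate of `ℝ³` with the outer ones, and the eigenvalues of `B` there are `λ²` and `-λ²`.
When `4a₁² = 6λ² = 4∑ b_i²`, `m1(C) = 3λ² + B`, so acting by it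
multiplies `C` by `2 * 3λ²`.
-/

open Matrix BigOperators

/-- The moment map polynomial `m1(C) = -2 ∑ α, (Cᵅ)²`, for tuples of square matrices over
an arbitrary (finite) index type. -/
def m1 {ι : Type*} [Fintype ι] {p : ℕ} (C : Fin p → Matrix ι ι ℝ) : Matrix ι ι ℝ :=
  (-2 : ℝ) • ∑ α, C α * C α

/-- `Jmat = [[0,1],[−1,0]]`. -/
def Jmat : Matrix (Fin 2) (Fin 2) ℝ := !![0, 1; -1, 0]

/-- The six matrices `B₁,…,B₆ ∈ so(4)` (0-indexed): `B₁ = diag(J,J)`,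
`B₂ = E₁₄ + E₂₃ − E₃₂ − E₄₁`, `B₃ = E₁₃ + E₂₄ − E₃₁ − E₄₂`, `B₄ = diag(J,−J)`,
`B₅ = E₁₄ − E₂₃ + E₃₂ − E₄₁`, `B₆ = E₁₃ − E₂₄ − E₃₁ + E₄₂`. -/
def Bmat : Fin 6 → Matrix (Fin 4) (Fin 4) ℝ :=
  ![!![0,1,0,0; -1,0,0,0; 0,0,0,1; 0,0,-1,0],
    !![0,0,0,1; 0,0,1,0; 0,-1,0,0; -1,0,0,0],
    !![0,0,1,0; 0,0,0,1; -1,0,0,0; 0,-1,0,0],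
    !![0,1,0,0; -1,0,0,0; 0,0,0,-1; 0,0,1,0],
    !![0,0,0,1; 0,0,-1,0; 0,1,0,0; -1,0,0,0],
    !![0,0,1,0; 0,0,0,-1; -1,0,0,0; 0,1,0,0]]

/-- `K₁ = E₁₂ − E₂₁ ∈ so(3)`. -/
def K₁ : Matrix (Fin 3) (Fin 3) ℝ := !![0,1,0; -1,0,0; 0,0,0]

/-- `K₂ = E₂₃ − E₃₂ ∈ so(3)`. -/
def K₂ : Matrix (Fin 3) (Fin 3) ℝ := !![0,0,0; 0,0,1; 0,-1,0]

/-- The index type for `so(9)`, presented in blocks of sizes `2 + 3 + 4`. -/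
abbrev idx9 : Type := Fin 2 ⊕ (Fin 3 ⊕ Fin 4)

/-- The tuple `C ∈ so(9)^j` of the paper's third family of examples: the first component
is `diag(a₁J, λK₁, b₁B₁)`, the second component is `diag(0₂, λK₂, b₂B₂)`, and the `i`-th
component for `3 ≤ i ≤ j` is `diag(0₂, 0₃, b_iB_i)`. -/
def tupC (j : ℕ) (hj : j ≤ 6) (a₁ lam : ℝ) (b : Fin j → ℝ) :
    Fin j → Matrix idx9 idx9 ℝ :=
  fun i => Matrix.fromBlocks
    (if (i : ℕ) = 0 then a₁ • Jmat else 0) 0 0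
    (Matrix.fromBlocks
      (if (i : ℕ) = 0 then lam • K₁ else if (i : ℕ) = 1 then lam • K₂ else 0) 0 0
      (b i • Bmat (Fin.castLE hj i)))

lemma Jmat_mul_self : Jmat * Jmat = -1 := by
  ext r s
  fin_cases r <;> fin_cases s <;> simp [Jmat]

lemma Bmat_mul_self (k : Fin 6) : Bmat k * Bmat k = -1 := by
  ext r s
  fin_cases k <;> fin_cases r <;> fin_cases s <;>
    simp [Bmat, Matrix.mul_apply, Fin.sum_univ_four]

lemma sum_fromBlocks_diag {ι l m : Type*} [Fintype ι]
    (A : ι → Matrix l l ℝ) (D : ι → Matrix m m ℝ) :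
    ∑ i, Matrix.fromBlocks (A i) 0 0 (D i) = Matrix.fromBlocks (∑ i, A i) 0 0 (∑ i, D i) := by
  ext (r | r) (s | s) <;> simp [Matrix.sum_apply]

lemma m1_tupC (j : ℕ) (hj2 : 2 ≤ j) (hj : j ≤ 6) (a₁ lam : ℝ) (b : Fin j → ℝ) :
    m1 (tupC j hj a₁ lam b) =
      Matrix.fromBlocks
        ((2 * a₁ ^ 2) • (1 : Matrix (Fin 2) (Fin 2) ℝ)) 0 0
        (Matrix.fromBlocks
          (Matrix.diagonal ![2 * lam ^ 2, 4 * lam ^ 2, 2 * lam ^ 2]) 0 0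
          ((2 * ∑ i, b i ^ 2) • (1 : Matrix (Fin 4) (Fin 4) ℝ))) := by
  have hsq : ∀ i, tupC j hj a₁ lam b i * tupC j hj a₁ lam b i =
      Matrix.fromBlocks (if (i : ℕ) = 0 then -(a₁ ^ 2) • (1 : Matrix (Fin 2) (Fin 2) ℝ) else 0) 0 0
        (Matrix.fromBlocks
          (if (i : ℕ) = 0 then Matrix.diagonal ![-lam ^ 2, -lam ^ 2, 0]
            else if (i : ℕ) = 1 then Matrix.diagonal ![0, -lam ^ 2, -lam ^ 2] else 0) 0 0
          (-(b i ^ 2) • (1 : Matrix (Fin 4) (Fin 4) ℝ))) := by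
    intro i
    simp only [tupC, Matrix.fromBlocks_multiply, Matrix.mul_zero, Matrix.zero_mul, add_zero,
      zero_add]
    congr 2
    · split_ifs
      · simp [Jmat_mul_self, smul_smul, sq]
      · simp
    · split_ifs
      · ext r s
        fin_cases r <;> fin_cases s <;>
          simp [K₁, Matrix.mul_apply, Fin.sum_univ_three, sq]
      · ext r s
        fin_cases r <;> fin_cases s <;>
          simp [K₂, Matrix.mul_apply, Fin.sum_univ_three, sq]
      · simp
    · simp [Bmat_mul_self, smul_smul, sq]
  obtain ⟨n, rfl⟩ : ∃ n, j = n + 2 := ⟨j - 2, by omega⟩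
  have hA : (-2 : ℝ) • ∑ i : Fin (n + 2),
      (if (i : ℕ) = 0 then -(a₁ ^ 2) • (1 : Matrix (Fin 2) (Fin 2) ℝ) else 0) =
        (2 * a₁ ^ 2) • 1 := by
    rw [Fin.sum_univ_succ]
    simp [smul_smul]
  have hK : (-2 : ℝ) • ∑ i : Fin (n + 2),
      (if (i : ℕ) = 0 then Matrix.diagonal ![-lam ^ 2, -lam ^ 2, 0]
        else if (i : ℕ) = 1 then Matrix.diagonal ![0, -lam ^ 2, -lam ^ 2] else 0) =
        Matrix.diagonal ![2 * lam ^ 2, 4 * lam ^ 2, 2 * lam ^ 2] := by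
    rw [Fin.sum_univ_succ, Fin.sum_univ_succ]
    ext r s
    fin_cases r <;> fin_cases s <;> simp
    ring
  have hB : (-2 : ℝ) • ∑ i : Fin (n + 2), -(b i ^ 2) • (1 : Matrix (Fin 4) (Fin 4) ℝ) =
      (2 * ∑ i, b i ^ 2) • 1 := by
    rw [← Finset.sum_smul, smul_smul, Finset.sum_neg_distrib, neg_mul_neg]
  unfold m1
  simp only [hsq, sum_fromBlocks_diag, Matrix.fromBlocks_smul, smul_zero, hA, hK, hB]

/-- The infinitesimal action of `diag(0, 0, -λ², λ², -λ², 0, 0, 0, 0)` kills every component of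
`C`: the entries of `K₁` and `K₂` sit at positions whose diagonal weights sum to zero. -/
lemma B_act_tupC (j : ℕ) (hj : j ≤ 6) (a₁ lam : ℝ) (b : Fin j → ℝ) (i : Fin j) :
    Matrix.fromBlocks (0 : Matrix (Fin 2) (Fin 2) ℝ) 0 0
        (Matrix.fromBlocks (Matrix.diagonal ![-lam ^ 2, lam ^ 2, -lam ^ 2]) 0 0
          (0 : Matrix (Fin 4) (Fin 4) ℝ)) * tupC j hj a₁ lam b i +
      tupC j hj a₁ lam b i *
        (Matrix.fromBlocks (0 : Matrix (Fin 2) (Fin 2) ℝ) 0 0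
          (Matrix.fromBlocks (Matrix.diagonal ![-lam ^ 2, lam ^ 2, -lam ^ 2]) 0 0
            (0 : Matrix (Fin 4) (Fin 4) ℝ))) = 0 := by
  have key : ∀ M : Matrix (Fin 3) (Fin 3) ℝ, (M = lam • K₁ ∨ M = lam • K₂ ∨ M = 0) →
      Matrix.diagonal ![-lam ^ 2, lam ^ 2, -lam ^ 2] * M +
        M * Matrix.diagonal ![-lam ^ 2, lam ^ 2, -lam ^ 2] = 0 := by
    rintro M (rfl | rfl | rfl)
    · ext r s
      rw [Matrix.add_apply, Matrix.diagonal_mul, Matrix.mul_diagonal]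
      fin_cases r <;> fin_cases s <;> simp [K₁] <;> ring
    · ext r s
      rw [Matrix.add_apply, Matrix.diagonal_mul, Matrix.mul_diagonal]
      fin_cases r <;> fin_cases s <;> simp [K₂] <;> ring
    · simp
  simp only [tupC, Matrix.fromBlocks_multiply, Matrix.fromBlocks_add, Matrix.mul_zero,
    Matrix.zero_mul, add_zero, zero_add]
  rw [key _ (by split_ifs <;> simp)]
  simp

/-- For the tuple `C` above, `m1(C) = diag(2a₁², 2a₁², 2λ², 4λ², 2λ², 2(b₁²+⋯+b_j²)·Id₄)`.
Moreover, if `4a₁² = 6λ² = 4(b₁²+⋯+b_j²)`, then the symmetric matrix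
`B = diag(0, 0, −λ², λ², −λ², 0, 0, 0, 0)` satisfies `B·C = 0` and
`m1(C) = 3λ²·Id₉ + B`, hence `m1(C)·C = 6λ²·C`; so `C` is a `GL₉(ℝ)`-distinguished point
with non-scalar `m1(C)`, producing a non-trivial Ricci Yang–Mills soliton. -/
theorem statement17 (j : ℕ) (hj2 : 2 ≤ j) (hj : j ≤ 6) (a₁ lam : ℝ) (b : Fin j → ℝ) :
    m1 (tupC j hj a₁ lam b) =
      Matrix.fromBlocks
        ((2 * a₁ ^ 2) • (1 : Matrix (Fin 2) (Fin 2) ℝ)) 0 0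
        (Matrix.fromBlocks
          (Matrix.diagonal ![2 * lam ^ 2, 4 * lam ^ 2, 2 * lam ^ 2]) 0 0
          ((2 * ∑ i, b i ^ 2) • (1 : Matrix (Fin 4) (Fin 4) ℝ))) ∧
    (4 * a₁ ^ 2 = 6 * lam ^ 2 → 6 * lam ^ 2 = 4 * ∑ i, b i ^ 2 →
      (Matrix.fromBlocks (0 : Matrix (Fin 2) (Fin 2) ℝ) 0 0
          (Matrix.fromBlocks (Matrix.diagonal ![-lam ^ 2, lam ^ 2, -lam ^ 2]) 0 0
            (0 : Matrix (Fin 4) (Fin 4) ℝ)))ᵀ =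
        Matrix.fromBlocks (0 : Matrix (Fin 2) (Fin 2) ℝ) 0 0
          (Matrix.fromBlocks (Matrix.diagonal ![-lam ^ 2, lam ^ 2, -lam ^ 2]) 0 0
            (0 : Matrix (Fin 4) (Fin 4) ℝ)) ∧
      (∀ i, Matrix.fromBlocks (0 : Matrix (Fin 2) (Fin 2) ℝ) 0 0
            (Matrix.fromBlocks (Matrix.diagonal ![-lam ^ 2, lam ^ 2, -lam ^ 2]) 0 0
              (0 : Matrix (Fin 4) (Fin 4) ℝ)) * tupC j hj a₁ lam b i +
          tupC j hj a₁ lam b i *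
            (Matrix.fromBlocks (0 : Matrix (Fin 2) (Fin 2) ℝ) 0 0
              (Matrix.fromBlocks (Matrix.diagonal ![-lam ^ 2, lam ^ 2, -lam ^ 2]) 0 0
                (0 : Matrix (Fin 4) (Fin 4) ℝ)))ᵀ = 0) ∧
      m1 (tupC j hj a₁ lam b) =
        (3 * lam ^ 2) • (1 : Matrix idx9 idx9 ℝ) +
          Matrix.fromBlocks (0 : Matrix (Fin 2) (Fin 2) ℝ) 0 0
            (Matrix.fromBlocks (Matrix.diagonal ![-lam ^ 2, lam ^ 2, -lam ^ 2]) 0 0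
              (0 : Matrix (Fin 4) (Fin 4) ℝ)) ∧
      ∀ i, m1 (tupC j hj a₁ lam b) * tupC j hj a₁ lam b i +
          tupC j hj a₁ lam b i * (m1 (tupC j hj a₁ lam b))ᵀ =
        (6 * lam ^ 2) • tupC j hj a₁ lam b i) := by
  have hBt : (Matrix.fromBlocks (0 : Matrix (Fin 2) (Fin 2) ℝ) 0 0
      (Matrix.fromBlocks (Matrix.diagonal ![-lam ^ 2, lam ^ 2, -lam ^ 2]) 0 0
        (0 : Matrix (Fin 4) (Fin 4) ℝ)))ᵀ =
      Matrix.fromBlocks (0 : Matrix (Fin 2) (Fin 2) ℝ) 0 0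
        (Matrix.fromBlocks (Matrix.diagonal ![-lam ^ 2, lam ^ 2, -lam ^ 2]) 0 0
          (0 : Matrix (Fin 4) (Fin 4) ℝ)) := by
    simp [Matrix.fromBlocks_transpose]
  have hm := m1_tupC j hj2 hj a₁ lam b
  refine ⟨hm, fun h1 h2 => ?_⟩
  have hdecomp : m1 (tupC j hj a₁ lam b) =
      (3 * lam ^ 2) • (1 : Matrix idx9 idx9 ℝ) +
        Matrix.fromBlocks (0 : Matrix (Fin 2) (Fin 2) ℝ) 0 0
          (Matrix.fromBlocks (Matrix.diagonal ![-lam ^ 2, lam ^ 2, -lam ^ 2]) 0 0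
            (0 : Matrix (Fin 4) (Fin 4) ℝ)) := by
    have e1 : 2 * a₁ ^ 2 = 3 * lam ^ 2 := by linarith
    have e2 : 2 * ∑ i, b i ^ 2 = 3 * lam ^ 2 := by linarith
    rw [hm, e1, e2, ← Matrix.fromBlocks_one, ← Matrix.fromBlocks_one]
    simp only [Matrix.fromBlocks_smul, Matrix.fromBlocks_add, smul_zero, add_zero]
    congr 2
    ext r s
    fin_cases r <;> fin_cases s <;> simp <;> ring
  refine ⟨hBt, fun i => ?_, hdecomp, fun i => ?_⟩
  · rw [hBt]
    exact B_act_tupC j hj a₁ lam b i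
  · have hact := B_act_tupC j hj a₁ lam b i
    rw [hdecomp, Matrix.transpose_add, hBt, Matrix.transpose_smul, Matrix.transpose_one,
      Matrix.add_mul, Matrix.mul_add, Matrix.smul_mul, Matrix.mul_smul, Matrix.one_mul,
      Matrix.mul_one, add_add_add_comm, hact, add_zero, ← add_smul]
    congr 1
    ring
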